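/- Let H and M be k×k filter matrices. (a) If H is identifiable and M ⪰ H, then M is identifiable. (b) If H is not identifiable and M ⪯ H, then M is not identifiable. -/

import Mathlib

open scoped BigOperators Classical

namespace FilteredMarkov

variable {k : ℕ}

/-- Probability of a complete realization `x` of the chain (of length `n+1`,
i.e. with `n` transitions), given the known initial state `s`, under the
transition probabilities `p`. -/
noncomputable def chainProb {n : ℕ} (p : Fin k → Fin k → ℝ) (s : Fin k)
    (x : Fin (n + 1) → Fin k) : ℝ :=
  (if x 0 = s then (1 : ℝ) else 0) * ∏ i : Fin n, p (x i.castSucc) (x i.succ)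

/-- Extension of a finite realization to all of `ℕ` (values beyond the range
are junk, obtained by reducing the index mod `n+1`). -/
def extChain {n : ℕ} (x : Fin (n + 1) → Fin k) : ℕ → Fin k :=
  fun t => x ⟨t % (n + 1), Nat.mod_lt _ (Nat.succ_pos n)⟩

/-- The filtered chain `φ_F(x)`: the state at position `t` is retained if the
transition into it (`f_{x_{t-1}, x_t} = 1`) or out of it (`f_{x_t, x_{t+1}} = 1`)
is recorded by the filter matrix `F`; otherwise it is replaced by a blank (`none`). -/
def phi {n : ℕ} (F : Fin k → Fin k → Bool) (x : Fin (n + 1) → Fin k) :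
    Fin (n + 1) → Option (Fin k) :=
  fun t =>
    if (0 < (t : ℕ) ∧ F (extChain x ((t : ℕ) - 1)) (x t) = true) ∨
        ((t : ℕ) + 1 < n + 1 ∧ F (x t) (extChain x ((t : ℕ) + 1)) = true)
    then some (x t) else none

/-- The probability distribution of the filtered chain `φ_F(X)` (as a probability
mass function on possible filtered sequences), for a chain of length `n+1` with
known initial state `s` and transition probabilities `p`. -/
noncomputable def obsDist (n : ℕ) (p : Fin k → Fin k → ℝ) (s : Fin k)
    (F : Fin k → Fin k → Bool) : (Fin (n + 1) → Option (Fin k)) → ℝ :=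
  fun y => ∑ x : Fin (n + 1) → Fin k, if phi F x = y then chainProb p s x else 0

/-- The parameter space: all the transition probabilities are strictly between
0 and 1 and each row of the transition probability matrix sums to 1. -/
def IsParam (p : Fin k → Fin k → ℝ) : Prop :=
  (∀ i j, 0 < p i j ∧ p i j < 1) ∧ ∀ i, ∑ j, p i j = 1

/-- A filter matrix `F` is identifiable (`F ∈ 𝓘`) if any two distinct values of the
parameter `θ` (the transition probabilities) induce distinct probability
distributions of the filtered chain `φ_F(X)` (for a sufficiently long chain). -/
def Identifiable (k : ℕ) (F : Fin k → Fin k → Bool) : Prop :=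
  ∀ p q : Fin k → Fin k → ℝ, IsParam p → IsParam q → p ≠ q →
    ∃ (n : ℕ) (s : Fin k), obsDist n p s F ≠ obsDist n q s F

/-!
A transition recorded by `M` leaves both of its endpoints visible in `phi M x`. If `M` records every
transition that `H` records, then `phi M x` already shows which transitions `H` records and where
they lie, so `phi H` is a function of `phi M`. The law of `phi H` is therefore an image of the law
of `phi M`, and parameters that the coarser observation separates are separated by the finer one.
-/

lemma sum_ite_comp_eq {α β γ R : Type*} [Fintype α] [Fintype β] [DecidableEq β]
    [DecidableEq γ] [AddCommMonoid R] (f : α → β) (g : β → γ) (w : α → R) (c : γ) :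
    ∑ a, (if g (f a) = c then w a else 0) =
      ∑ b, if g b = c then ∑ a, (if f a = b then w a else 0) else 0 := by
  rw [← Finset.sum_fiberwise Finset.univ f]
  refine Finset.sum_congr rfl fun b _ => ?_
  have on_fiber : ∀ a ∈ Finset.univ.filter (f · = b),
      (if g (f a) = c then w a else 0) = if g b = c then w a else 0 :=
    fun a ha => by rw [(Finset.mem_filter.1 ha).2]
  rw [Finset.sum_congr rfl on_fiber]
  split_ifs
  · exact Finset.sum_filter _ _
  · exact Finset.sum_const_zero

lemma le_iff_forall_eq_false_imp {ι κ : Type*} {A B : ι → κ → Bool} :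
    A ≤ B ↔ ∀ i j, B i j = false → A i j = false :=
  forall₂_congr fun i j => by cases A i j <;> cases B i j <;> simp

section FilteredChain

variable {n : ℕ} {F H M : Fin k → Fin k → Bool} {x x' : Fin (n + 1) → Fin k}
  {t : Fin (n + 1)} {a : Fin k}

/-- Position `t` of the realization `x` is retained by the filter `F`: it is an endpoint of a
transition recorded by `F`. Transitions are indexed by `i : Fin n`, the `i`-th one going from
position `i.castSucc` to position `i.succ`, so no junk value of `extChain` can occur. -/
def IsRetained (F : Fin k → Fin k → Bool) (x : Fin (n + 1) → Fin k) (t : Fin (n + 1)) : Prop :=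
  ∃ i : Fin n, (t = i.castSucc ∨ t = i.succ) ∧ F (x i.castSucc) (x i.succ) = true

lemma extChain_val (x : Fin (n + 1) → Fin k) (t : Fin (n + 1)) : extChain x t = x t :=
  congrArg x (Fin.ext (Nat.mod_eq_of_lt t.isLt))

lemma isRetained_iff_extChain :
    IsRetained F x t ↔
      (0 < (t : ℕ) ∧ F (extChain x ((t : ℕ) - 1)) (x t) = true) ∨
        ((t : ℕ) + 1 < n + 1 ∧ F (x t) (extChain x ((t : ℕ) + 1)) = true) := by
  have source (i : Fin n) : extChain x i = x i.castSucc := extChain_val x i.castSucc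
  have target (i : Fin n) : extChain x (i + 1) = x i.succ := extChain_val x i.succ
  constructor
  · rintro ⟨i, rfl | rfl, hF⟩
    · exact Or.inr ⟨Nat.succ_lt_succ i.isLt, (target i).symm ▸ hF⟩
    · exact Or.inl ⟨i.val.succ_pos, (source i).symm ▸ hF⟩
  · rintro (⟨ht, hF⟩ | ⟨ht, hF⟩)
    · obtain ⟨i, rfl⟩ := Fin.exists_succ_eq.2 (Fin.pos_iff_ne_zero.1 ht)
      exact ⟨i, Or.inr rfl, source i ▸ hF⟩
    · let i : Fin n := ⟨t, Nat.lt_of_succ_lt_succ ht⟩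
      exact ⟨i, Or.inl rfl, target i ▸ hF⟩

lemma phi_eq_some_iff :
    phi F x t = some a ↔ IsRetained F x t ∧ x t = a := by
  rw [isRetained_iff_extChain, phi, Option.ite_none_right_eq_some, Option.some_inj]

lemma IsRetained.eq_of_phi_eq (ht : IsRetained F x t)
    (hphi : phi F x = phi F x') : x t = x' t :=
  (phi_eq_some_iff.1 (hphi ▸ phi_eq_some_iff.2 ⟨ht, rfl⟩)).2.symm

lemma IsRetained.mono (hHM : H ≤ M) (ht : IsRetained H x t) :
    IsRetained M x t :=
  let ⟨i, hti, hH⟩ := ht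
  ⟨i, hti, hHM _ _ hH⟩

lemma IsRetained.of_phi_eq (hHM : H ≤ M) (hphi : phi M x = phi M x')
    (ht : IsRetained H x t) : IsRetained H x' t := by
  obtain ⟨i, hti, hH⟩ := ht
  have source_eq : x i.castSucc = x' i.castSucc :=
    IsRetained.eq_of_phi_eq ⟨i, Or.inl rfl, hHM _ _ hH⟩ hphi
  have target_eq : x i.succ = x' i.succ :=
    IsRetained.eq_of_phi_eq ⟨i, Or.inr rfl, hHM _ _ hH⟩ hphi
  exact ⟨i, hti, source_eq ▸ target_eq ▸ hH⟩

lemma phi_eq_some_of_phi_eq (hHM : H ≤ M)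
    (hphi : phi M x = phi M x') (ha : phi H x t = some a) : phi H x' t = some a := by
  obtain ⟨ht, rfl⟩ := phi_eq_some_iff.1 ha
  exact phi_eq_some_iff.2 ⟨ht.of_phi_eq hHM hphi, ((ht.mono hHM).eq_of_phi_eq hphi).symm⟩

theorem phi_factorsThrough (hHM : H ≤ M) :
    Function.FactorsThrough (phi (n := n) H) (phi M) := fun _ _ hphi =>
  funext fun _ => Option.ext fun _ =>
    ⟨phi_eq_some_of_phi_eq hHM hphi, phi_eq_some_of_phi_eq hHM hphi.symm⟩

end FilteredChain

theorem obsDist_eq_of_le {n : ℕ} {H M : Fin k → Fin k → Bool} {p q : Fin k → Fin k → ℝ}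
    {s : Fin k} (hHM : H ≤ M) (hM : obsDist n p s M = obsDist n q s M) :
    obsDist n p s H = obsDist n q s H := by
  obtain ⟨g, hg⟩ := (Function.factorsThrough_iff _).1 (phi_factorsThrough (n := n) hHM)
  have obsDist_image (r : Fin k → Fin k → ℝ) (y : Fin (n + 1) → Option (Fin k)) :
      obsDist n r s H y = ∑ z, if g z = y then obsDist n r s M z else 0 := by
    simp only [obsDist, hg, Function.comp_apply]
    exact sum_ite_comp_eq (phi M) g (chainProb r s) y
  funext y
  rw [obsDist_image p, obsDist_image q, hM]

theorem identifiable_monotone : Monotone (Identifiable k) := by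
  intro H M hHM hH p q hp hq hpq
  obtain ⟨n, s, hne⟩ := hH p q hp hq hpq
  exact ⟨n, s, mt (obsDist_eq_of_le hHM) hne⟩

/-- Let `H` and `M` be `k × k` filter matrices.
(a) If `H` is identifiable and `M ⪰ H` (`h_ij = 1 → m_ij = 1`), then `M` is
identifiable.
(b) If `H` is not identifiable and `M ⪯ H` (`h_ij = 0 → m_ij = 0`), then `M` is
not identifiable. -/
theorem statement_2 {k : ℕ} (H M : Fin k → Fin k → Bool) :
    ((Identifiable k H ∧ ∀ i j, H i j = true → M i j = true) → Identifiable k M) ∧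
      ((¬ Identifiable k H ∧ ∀ i j, H i j = false → M i j = false) →
        ¬ Identifiable k M) := by
  constructor
  · rintro ⟨hH, hHM⟩
    exact identifiable_monotone hHM hH
  · rintro ⟨hH, hMH⟩
    exact mt (identifiable_monotone (le_iff_forall_eq_false_imp.2 hMH)) hH

end FilteredMarkov
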